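/- arXiv:1302.4091 — 2 statements merged into one kernel-verified Lean document; each statement's English description precedes it below -/
import Mathlib

section
/- Under the parametrization (t, θ, u) ↦ g_t R_θ n_u of the set W = {(a b; c d) ∈ SL(2,ℝ) : d > 0, |bd| < 1/2}, the restriction to W of a suitably normalized Haar measure on SL(2,ℝ) is given by the density cos(2θ) dt dθ du on ℝ × (−π/4, π/4) × ℝ. -/
open Real MeasureTheory Matrix Set Filter

noncomputable def gMat (t : ℝ) : Matrix (Fin 2) (Fin 2) ℝ :=
  !![Real.exp t, 0; 0, Real.exp (-t)]

noncomputable def RMat (θ : ℝ) : Matrix (Fin 2) (Fin 2) ℝ :=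
  !![Real.cos θ, -Real.sin θ; Real.sin θ, Real.cos θ]

def nMat (u : ℝ) : Matrix (Fin 2) (Fin 2) ℝ := !![1, 0; u, 1]

noncomputable def NMat (a b : ℝ) : Matrix (Fin 2) (Fin 2) ℝ := !![a, b; 0, a⁻¹]

/-- Euclidean norm on ℝ². -/
noncomputable def vnorm (v : Fin 2 → ℝ) : ℝ := Real.sqrt (v 0 ^ 2 + v 1 ^ 2)

def e2 : Fin 2 → ℝ := ![0, 1]

/-- `J T θ = {t : ‖g_t R_θ e₂‖ < exp (-T)}`. -/
noncomputable def J (T θ : ℝ) : Set ℝ :=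
  {t | vnorm ((gMat t * RMat θ).mulVec e2) < Real.exp (-T)}

/-- The set `W` of matrices `(a b; c d)` in `SL(2,ℝ)` with `d > 0` and `|bd| < 1/2`. -/
def Wset : Set (Matrix (Fin 2) (Fin 2) ℝ) :=
  {A | A.det = 1 ∧ 0 < A 1 1 ∧ |A 0 1 * A 1 1| < 1 / 2}

instance : MeasurableSpace (Matrix (Fin 2) (Fin 2) ℝ) := by
  unfold Matrix; infer_instance


abbrev M2 := Matrix (Fin 2) (Fin 2) ℝ

theorem m2_measurable_entry (i j : Fin 2) : Measurable (fun A : M2 => A i j) :=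
  (measurable_pi_apply j).comp (measurable_pi_apply (X := fun _ : Fin 2 => Fin 2 → ℝ) i)

theorem m2_measurable_of {α : Type*} [MeasurableSpace α] (f : α → M2)
    (h : ∀ i j, Measurable (fun x => f x i j)) : Measurable f := by
  refine measurable_pi_iff.2 (fun i => ?_)
  exact measurable_pi_iff.2 (fun j => h i j)

theorem m2_measurable_mk {α : Type*} [MeasurableSpace α] {a b c d : α → ℝ}
    (ha : Measurable a) (hb : Measurable b) (hc : Measurable c) (hd : Measurable d) :
    Measurable (fun x => (!![a x, b x; c x, d x] : M2)) := by
  refine m2_measurable_of _ (fun i j => ?_)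
  fin_cases i <;> fin_cases j <;> simpa

theorem m2_measurable_mul {α : Type*} [MeasurableSpace α] {f g : α → M2}
    (hf : Measurable f) (hg : Measurable g) : Measurable (fun x => f x * g x) := by
  refine m2_measurable_of _ (fun i j => ?_)
  simp only [Matrix.mul_apply, Fin.sum_univ_two]
  exact (((m2_measurable_entry i 0).comp hf).mul ((m2_measurable_entry 0 j).comp hg)).add
    (((m2_measurable_entry i 1).comp hf).mul ((m2_measurable_entry 1 j).comp hg))

theorem m2_measurable_det : Measurable (fun A : M2 => A.det) := by
  simp only [Matrix.det_fin_two]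
  exact ((m2_measurable_entry 0 0).mul (m2_measurable_entry 1 1)).sub
    ((m2_measurable_entry 0 1).mul (m2_measurable_entry 1 0))

theorem m2_measurableSet_det : MeasurableSet {A : M2 | A.det = 1} :=
  m2_measurable_det (measurableSet_singleton 1)

abbrev SL2R := Matrix.SpecialLinearGroup (Fin 2) ℝ

instance sl2rMeas : MeasurableSpace SL2R :=
  inferInstanceAs (MeasurableSpace {A : M2 // A.det = 1})

def sl2Coe (A : SL2R) : M2 := A.1

theorem sl2_emb : MeasurableEmbedding sl2Coe :=
  MeasurableEmbedding.subtype_coe m2_measurableSet_det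

theorem sl2_range : Set.range sl2Coe = {A : M2 | A.det = 1} := Subtype.range_coe

instance sl2rMul : MeasurableMul₂ SL2R := by
  constructor
  refine sl2_emb.measurable_comp_iff.1 ?_
  exact m2_measurable_mul (sl2_emb.measurable.comp measurable_fst)
    (sl2_emb.measurable.comp measurable_snd)

instance sl2rInv : MeasurableInv SL2R := by
  constructor
  refine sl2_emb.measurable_comp_iff.1 ?_
  have : (sl2Coe ∘ fun A : SL2R => A⁻¹) =
      fun A : SL2R => (!![sl2Coe A 1 1, - sl2Coe A 0 1; - sl2Coe A 1 0, sl2Coe A 0 0] : M2) := by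
    funext A
    simp only [Function.comp, sl2Coe]
    exact Matrix.adjugate_fin_two A.1
  rw [this]
  have h := fun i j => (m2_measurable_entry i j).comp sl2_emb.measurable
  exact m2_measurable_mk (h 1 1) (h 0 1).neg (h 1 0).neg (h 0 0)

theorem m2_map_comap (μ : Measure M2) (hsupp : μ {A | A.det ≠ 1} = 0) :
    (μ.comap sl2Coe).map sl2Coe = μ := by
  rw [sl2_emb.map_comap, sl2_range]
  refine Measure.restrict_eq_self_of_ae_mem ?_
  rw [ae_iff]
  exact hsupp

theorem m2_inv (μ : Measure M2) (hsupp : μ {A | A.det ≠ 1} = 0)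
    (hinv : ∀ B : M2, B.det = 1 → Measure.map (fun A => B * A) μ = μ) :
    (μ.comap sl2Coe).IsMulLeftInvariant := by
  constructor
  intro g
  ext s hs
  have hm : Measurable (fun x : SL2R => g * x) := measurable_const_mul g
  have hg : (sl2Coe g).det = 1 := g.2
  have e : μ (sl2Coe '' s) = μ ((fun A : M2 => sl2Coe g * A) ⁻¹' (sl2Coe '' s)) := by
    conv_lhs => rw [← hinv (sl2Coe g) hg]
    exact Measure.map_apply (m2_measurable_mul measurable_const measurable_id)
      (sl2_emb.measurableSet_image.2 hs)
  rw [Measure.map_apply hm hs, sl2_emb.comap_apply, sl2_emb.comap_apply, e]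
  rw [← measure_inter_add_sdiff (μ := μ) ((fun A : M2 => sl2Coe g * A) ⁻¹' (sl2Coe '' s))
    m2_measurableSet_det]
  have h0 : μ (((fun A : M2 => sl2Coe g * A) ⁻¹' (sl2Coe '' s)) \ {A : M2 | A.det = 1}) = 0 :=
    measure_mono_null (fun A hA => hA.2) hsupp
  rw [h0, add_zero]
  congr 1
  ext A
  constructor
  · rintro ⟨x, hx, rfl⟩
    exact ⟨⟨g * x, hx, rfl⟩, x.2⟩
  · rintro ⟨⟨y, hy, hyA⟩, hA⟩
    refine ⟨⟨A, hA⟩, ?_, rfl⟩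
    have h2 : ∀ x : SL2R, sl2Coe x = A → x ∈ (fun x => g * x) ⁻¹' s := by
      intro x hx
      have h3 : g * x = y := by
        refine sl2_emb.injective ?_
        rw [hyA, ← hx]
        rfl
      simpa [h3] using hy
    exact h2 _ rfl

theorem m2_unique (μ ν : Measure M2) [SigmaFinite μ] [SigmaFinite ν]
    (hμ : μ {A | A.det ≠ 1} = 0) (hν : ν {A | A.det ≠ 1} = 0)
    (hμi : ∀ B : M2, B.det = 1 → Measure.map (fun A => B * A) μ = μ)
    (hνi : ∀ B : M2, B.det = 1 → Measure.map (fun A => B * A) ν = ν)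
    (s : Set M2) (h0 : ν s ≠ 0) (h1 : ν s ≠ ⊤) :
    μ = (μ s / ν s) • ν := by
  have e1 := m2_map_comap μ hμ
  have e2 := m2_map_comap ν hν
  have i1 := m2_inv μ hμ hμi
  have i2 := m2_inv ν hν hνi
  have s1 : SigmaFinite (μ.comap sl2Coe) :=
    SigmaFinite.of_map _ sl2_emb.measurable.aemeasurable (by rw [e1]; infer_instance)
  have s2 : SigmaFinite (ν.comap sl2Coe) :=
    SigmaFinite.of_map _ sl2_emb.measurable.aemeasurable (by rw [e2]; infer_instance)
  have a1 : μ.comap sl2Coe (sl2Coe ⁻¹' s) = μ s := by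
    rw [← sl2_emb.map_apply, e1]
  have a2 : ν.comap sl2Coe (sl2Coe ⁻¹' s) = ν s := by
    rw [← sl2_emb.map_apply, e2]
  have key := measure_eq_div_smul (μ.comap sl2Coe) (ν.comap sl2Coe) (s := sl2Coe ⁻¹' s)
    (by rwa [a2]) (by rwa [a2])
  rw [a1, a2] at key
  have := congrArg (Measure.map sl2Coe) key
  rwa [Measure.map_smul, e1, e2] at this

/-- The chart `((b,d),w) ↦ (1/d + b w, b; w d, d)`. -/
noncomputable def psiM (p : (ℝ × ℝ) × ℝ) : M2 :=
  !![1 / p.1.2 + p.1.1 * p.2, p.1.1; p.2 * p.1.2, p.1.2]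

theorem psiM_meas : Measurable psiM := by
  unfold psiM
  exact m2_measurable_mk (by fun_prop) (by fun_prop) (by fun_prop) (by fun_prop)

theorem psiM_det (p : (ℝ × ℝ) × ℝ) (h : p.1.2 ≠ 0) : (psiM p).det = 1 := by
  simp only [psiM, Matrix.det_fin_two_of]
  field_simp
  ring

/-- A nonzero linear form on the plane is almost everywhere nonzero. -/
theorem ae_lin_ne (x y : ℝ) (h : x ≠ 0 ∨ y ≠ 0) :
    ∀ᵐ p : ℝ × ℝ, x * p.1 + y * p.2 ≠ 0 := by
  have hm : MeasurableSet {p : ℝ × ℝ | x * p.1 + y * p.2 ≠ 0} := by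
    have : Measurable (fun p : ℝ × ℝ => x * p.1 + y * p.2) := by fun_prop
    exact this (measurableSet_singleton 0).compl
  rw [Measure.volume_eq_prod]
  by_cases hy : y = 0
  · have hx : x ≠ 0 := by tauto
    have h1 : ∀ᵐ a : ℝ, a ≠ 0 := by simp [ae_iff]
    rw [Measure.ae_prod_iff_ae_ae hm]
    filter_upwards [h1] with a ha
    simp [hy, hx, ha]
  · rw [Measure.ae_prod_iff_ae_ae hm]
    refine Filter.Eventually.of_forall (fun a => ?_)
    have h1 : ∀ᵐ b : ℝ, b ≠ - (x * a) / y := by simp [ae_iff]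
    filter_upwards [h1] with b hb
    intro h0
    apply hb
    field_simp
    linarith

theorem ae_fst {P : ℝ × ℝ → Prop} (h : ∀ᵐ p : ℝ × ℝ, P p) : ∀ᵐ p : (ℝ × ℝ) × ℝ, P p.1 := by
  rw [Measure.volume_eq_prod]
  exact Measure.quasiMeasurePreserving_fst.ae h

noncomputable def nuM : Measure M2 := Measure.map psiM volume

theorem nuM_supp : nuM {A | A.det ≠ 1} = 0 := by
  have hms : MeasurableSet {A : M2 | A.det ≠ 1} := m2_measurableSet_det.compl
  rw [nuM, Measure.map_apply psiM_meas hms]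
  have := ae_fst (ae_lin_ne 0 1 (Or.inr one_ne_zero))
  rw [ae_iff] at this
  refine measure_mono_null (fun p hp => ?_) this
  simp only [Set.mem_ofPred_eq, not_not]
  by_contra h
  exact hp (psiM_det p (by simpa using h))

instance nuM_sf : SigmaFinite nuM := by
  have hF : Measurable (fun A : M2 => (((A 0 1, A 1 1), A 1 0 / A 1 1) : (ℝ × ℝ) × ℝ)) :=
    ((m2_measurable_entry 0 1).prodMk (m2_measurable_entry 1 1)).prodMk
      ((m2_measurable_entry 1 0).div (m2_measurable_entry 1 1))
  refine SigmaFinite.of_map nuM hF.aemeasurable ?_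
  have : Measure.map (fun A : M2 => (((A 0 1, A 1 1), A 1 0 / A 1 1) : (ℝ × ℝ) × ℝ)) nuM
      = volume := by
    rw [nuM, Measure.map_map hF psiM_meas]
    conv_rhs => rw [← Measure.map_id (μ := (volume : Measure ((ℝ × ℝ) × ℝ)))]
    refine Measure.map_congr ?_
    filter_upwards [ae_fst (ae_lin_ne 0 1 (Or.inr one_ne_zero))] with p hp
    have hp' : p.1.2 ≠ 0 := by simpa using hp
    simp [psiM, hp']
  rw [this]
  infer_instance

theorem lin_mp (B : M2) (hB : B.det = 1) :
    MeasurePreserving (fun p : ℝ × ℝ => (B 0 0 * p.1 + B 0 1 * p.2, B 1 0 * p.1 + B 1 1 * p.2)) := by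
  refine ⟨by fun_prop, ?_⟩
  have hd : LinearMap.det (Matrix.toLin (.finTwoProd ℝ) (.finTwoProd ℝ) B) = 1 := by
    rw [LinearMap.det_toLin, hB]
  have := Measure.map_linearMap_addHaar_eq_smul_addHaar (volume : Measure (ℝ × ℝ))
    (f := Matrix.toLin (.finTwoProd ℝ) (.finTwoProd ℝ) B) (by rw [hd]; exact one_ne_zero)
  rw [hd] at this
  simp only [inv_one, abs_one, ENNReal.ofReal_one, one_smul] at this
  have hf : (fun p : ℝ × ℝ => (B 0 0 * p.1 + B 0 1 * p.2, B 1 0 * p.1 + B 1 1 * p.2)) =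
      ⇑(Matrix.toLin (.finTwoProd ℝ) (.finTwoProd ℝ) B) := by
    funext p
    have hBe : B = !![B 0 0, B 0 1; B 1 0, B 1 1] := Matrix.eta_fin_two B
    conv_rhs => rw [hBe]
    rw [Matrix.toLin_finTwoProd_apply]
  rw [hf]
  exact this

theorem map_add_vol (a : ℝ) : Measure.map (fun w : ℝ => w + a) volume = volume :=
  (measurePreserving_add_right volume a).map_eq

theorem nuM_inv (B : M2) (hB : B.det = 1) : Measure.map (fun A => B * A) nuM = nuM := by
  have hdet : B 0 0 * B 1 1 - B 0 1 * B 1 0 = 1 := by rw [← hB, Matrix.det_fin_two]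
  have hskew := MeasurePreserving.skew_product (lin_mp B hB) (μc := (volume : Measure ℝ))
    (μd := (volume : Measure ℝ))
    (g := fun p w => w + B 1 0 / (p.2 * (B 1 0 * p.1 + B 1 1 * p.2)))
    (by simp only [Function.uncurry_def]; fun_prop)
    (Filter.Eventually.of_forall (fun p => map_add_vol _))
  rw [← Measure.volume_eq_prod] at hskew
  have hmB : Measurable (fun A : M2 => B * A) := m2_measurable_mul measurable_const measurable_id
  rw [nuM, Measure.map_map hmB psiM_meas]
  conv_rhs => rw [← hskew.map_eq]
  rw [Measure.map_map psiM_meas hskew.measurable]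
  refine Measure.map_congr ?_
  have h10 : B 1 0 ≠ 0 ∨ B 1 1 ≠ 0 := by
    by_contra h
    push Not at h
    rw [h.1, h.2] at hdet
    norm_num at hdet
  filter_upwards [ae_fst (ae_lin_ne 0 1 (Or.inr one_ne_zero)),
    ae_fst (ae_lin_ne (B 1 0) (B 1 1) h10)] with p hp hq
  have hp' : p.1.2 ≠ 0 := by simpa using hp
  obtain ⟨⟨b, d⟩, w⟩ := p
  simp only at hp' hq
  ext i j
  fin_cases i <;> fin_cases j <;>
    simp only [Function.comp, psiM, Matrix.mul_apply, Fin.sum_univ_two] <;> simp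
  · obtain ⟨D, hD⟩ : ∃ D, D = B 1 0 * b + B 1 1 * d := ⟨_, rfl⟩
    rw [← hD] at hq ⊢
    field_simp
    linear_combination d * hdet + B 0 0 * hD
  · obtain ⟨D, hD⟩ : ∃ D, D = B 1 0 * b + B 1 1 * d := ⟨_, rfl⟩
    rw [← hD] at hq ⊢
    field_simp
    linear_combination - d * w * hD

noncomputable def fC (p : ℝ × ℝ) : ℝ × ℝ :=
  (-(Real.exp p.1 * Real.sin p.2), Real.exp (-p.1) * Real.cos p.2)

theorem fC_meas : Measurable fC := by
  unfold fC
  fun_prop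

noncomputable def fC' (p : ℝ × ℝ) : ℝ × ℝ →L[ℝ] ℝ × ℝ :=
  (Matrix.toLin (.finTwoProd ℝ) (.finTwoProd ℝ)
    !![-(Real.exp p.1 * Real.sin p.2), -(Real.exp p.1 * Real.cos p.2);
      -(Real.exp (-p.1) * Real.cos p.2), -(Real.exp (-p.1) * Real.sin p.2)]).toContinuousLinearMap

theorem fC_deriv (p : ℝ × ℝ) : HasFDerivAt fC (fC' p) p := by
  unfold fC'
  rw [Matrix.toLin_finTwoProd_toContinuousLinearMap]
  have h1 : HasFDerivAt (fun p : ℝ × ℝ => p.1) (ContinuousLinearMap.fst ℝ ℝ ℝ) p := hasFDerivAt_fst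
  have h2 : HasFDerivAt (fun p : ℝ × ℝ => p.2) (ContinuousLinearMap.snd ℝ ℝ ℝ) p := hasFDerivAt_snd
  have := ((h1.exp.mul h2.sin).neg).prodMk (h1.neg.exp.mul h2.cos)
  refine this.congr_fderiv ?_
  ext <;> simp <;> ring

theorem fC_det (p : ℝ × ℝ) : (fC' p).det = -Real.cos (2 * p.2) := by
  unfold fC'
  have h : Real.exp p.1 * Real.exp (-p.1) = 1 := by rw [← Real.exp_add]; simp
  simp only [LinearMap.det_toContinuousLinearMap, LinearMap.det_toLin,
    Matrix.det_fin_two_of]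
  rw [Real.cos_two_mul']
  linear_combination (Real.sin p.2 ^ 2 - Real.cos p.2 ^ 2) * h

def sC : Set (ℝ × ℝ) := Set.univ ×ˢ Set.Ioo (-(π / 4)) (π / 4)

theorem sC_meas : MeasurableSet sC := MeasurableSet.univ.prod measurableSet_Ioo

theorem cos_pos_of_sC {p : ℝ × ℝ} (hp : p ∈ sC) : 0 < Real.cos p.2 := by
  have h := hp.2
  have := Real.pi_pos
  exact Real.cos_pos_of_mem_Ioo ⟨by linarith [h.1], by linarith [h.2]⟩

theorem cos2_pos_of_sC {p : ℝ × ℝ} (hp : p ∈ sC) : 0 < Real.cos (2 * p.2) := by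
  have h := hp.2
  exact Real.cos_pos_of_mem_Ioo ⟨by linarith [h.1], by linarith [h.2]⟩

theorem fC_prod (p : ℝ × ℝ) : (fC p).1 * (fC p).2 = - Real.sin (2 * p.2) / 2 := by
  have h : Real.exp p.1 * Real.exp (-p.1) = 1 := by rw [← Real.exp_add]; simp
  simp only [fC, Real.sin_two_mul]
  linear_combination (- Real.sin p.2 * Real.cos p.2) * h

theorem fC_inj : Set.InjOn fC sC := by
  intro p hp q hq hpq
  have h1 := fC_prod p
  rw [hpq, fC_prod q] at h1
  have h2 : 2 * p.2 = 2 * q.2 := by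
    refine Real.injOn_sin ⟨?_, ?_⟩ ⟨?_, ?_⟩ (by linarith)
    · linarith [hp.2.1]
    · linarith [hp.2.2]
    · linarith [hq.2.1]
    · linarith [hq.2.2]
  have h3 : p.2 = q.2 := by linarith
  have h4 : Real.exp (-p.1) * Real.cos p.2 = Real.exp (-q.1) * Real.cos q.2 :=
    congrArg Prod.snd hpq
  rw [h3] at h4
  have h5 := mul_right_cancel₀ (cos_pos_of_sC hq).ne' h4
  have h6 := Real.exp_injective h5
  exact Prod.ext (by linarith) h3

theorem fC_image : fC '' sC = {q : ℝ × ℝ | 0 < q.2 ∧ |q.1 * q.2| < 1 / 2} := by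
  ext q
  constructor
  · rintro ⟨p, hp, rfl⟩
    refine ⟨mul_pos (Real.exp_pos _) (cos_pos_of_sC hp), ?_⟩
    rw [fC_prod]
    have hc := cos2_pos_of_sC hp
    have := Real.sin_sq_add_cos_sq (2 * p.2)
    have h1 : |Real.sin (2 * p.2)| < 1 := by
      rw [← sq_lt_one_iff_abs_lt_one]
      nlinarith
    rw [abs_div, abs_neg, abs_of_pos (two_pos : (0 : ℝ) < 2)]
    linarith
  · rintro ⟨h1, h2⟩
    obtain ⟨b, d⟩ := q
    simp only at h1 h2
    rw [abs_lt] at h2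
    have hs : Real.sin (Real.arcsin (-(2 * (b * d)))) = -(2 * (b * d)) :=
      Real.sin_arcsin (by linarith) (by linarith)
    have ha : Real.arcsin (-(2 * (b * d))) < π / 2 := Real.arcsin_lt_pi_div_two.2 (by linarith)
    have hb : -(π / 2) < Real.arcsin (-(2 * (b * d))) :=
      Real.neg_pi_div_two_lt_arcsin.2 (by linarith)
    obtain ⟨θ, hθ⟩ : ∃ θ, 2 * θ = Real.arcsin (-(2 * (b * d))) :=
      ⟨Real.arcsin (-(2 * (b * d))) / 2, by ring⟩
    rw [← hθ] at hs ha hb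
    have hθm : ((0 : ℝ), θ) ∈ sC := ⟨trivial, by simp only; linarith, by simp only; linarith⟩
    have hc : 0 < Real.cos θ := cos_pos_of_sC hθm
    refine ⟨(Real.log (Real.cos θ / d), θ), ⟨trivial, hθm.2⟩, ?_⟩
    have hpos : 0 < Real.cos θ / d := div_pos hc h1
    simp only [fC, Real.exp_neg, Real.exp_log hpos]
    rw [Real.sin_two_mul] at hs
    refine Prod.ext ?_ ?_
    · simp only
      field_simp
      linarith
    · simp only
      field_simp

theorem fC_mp : MeasurePreserving fC
    ((volume.restrict sC).withDensity fun p => ENNReal.ofReal (Real.cos (2 * p.2)))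
    (volume.restrict (fC '' sC)) := by
  refine ⟨fC_meas, ?_⟩
  rw [← map_withDensity_abs_det_fderiv_eq_addHaar volume sC_meas.nullMeasurableSet
    (fun x _ => (fC_deriv x).hasFDerivWithinAt) fC_inj]
  congr 1
  refine withDensity_congr_ae ?_
  filter_upwards [ae_restrict_mem sC_meas] with p hp
  rw [fC_det, abs_neg, abs_of_pos (cos2_pos_of_sC hp)]

theorem Wset_meas : MeasurableSet Wset := by
  have h1 : MeasurableSet {A : M2 | 0 < A 1 1} := m2_measurable_entry 1 1 measurableSet_Ioi
  have h2 : MeasurableSet {A : M2 | |A 0 1 * A 1 1| < 1 / 2} :=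
    measurableSet_lt (((m2_measurable_entry 0 1).mul (m2_measurable_entry 1 1)).norm)
      measurable_const
  exact m2_measurableSet_det.inter (h1.inter h2)

theorem nuM_W : nuM.restrict Wset =
    Measure.map psiM ((volume.restrict (fC '' sC)).prod volume) := by
  rw [nuM, Measure.restrict_map psiM_meas Wset_meas]
  congr 1
  rw [← Measure.restrict_univ (μ := (volume : Measure ℝ)), Measure.prod_restrict,
    ← Measure.volume_eq_prod]
  congr 1
  ext p
  rw [fC_image]
  constructor
  · rintro ⟨_, h1, h2⟩
    exact ⟨⟨h1, h2⟩, trivial⟩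
  · rintro ⟨⟨h1, h2⟩, _⟩
    exact ⟨psiM_det p h1.ne', h1, h2⟩

theorem src_eq : ((volume : Measure (ℝ × ℝ × ℝ)).restrict
      (Set.univ ×ˢ Set.Ioo (-(π / 4)) (π / 4) ×ˢ Set.univ)).withDensity
        (fun p => ENNReal.ofReal (Real.cos (2 * p.2.1))) =
    Measure.map MeasurableEquiv.prodAssoc
      (((volume.restrict sC).withDensity fun p : ℝ × ℝ => ENNReal.ofReal (Real.cos (2 * p.2))).prod
        (volume : Measure ℝ)) := by
  have hvol := (volume_preserving_prodAssoc (α₁ := ℝ) (β₁ := ℝ) (γ₁ := ℝ)).map_eq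
  rw [prod_withDensity_left (by fun_prop)]
  conv_rhs => rw [← Measure.restrict_univ (μ := (volume : Measure ℝ)), Measure.prod_restrict,
    ← Measure.volume_eq_prod]
  ext s hs
  have hm := (MeasurableEquiv.prodAssoc : (ℝ × ℝ) × ℝ ≃ᵐ ℝ × ℝ × ℝ).measurable
  rw [Measure.map_apply hm hs, withDensity_apply _ hs, withDensity_apply _ (hm hs),
    Measure.restrict_restrict hs, Measure.restrict_restrict (hm hs)]
  rw [← hvol, MeasurableEquiv.restrict_map, lintegral_map_equiv]
  congr 2
  ext p
  simp [MeasurableEquiv.prodAssoc, sC]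

theorem lhs_eq : Measure.map (fun p : ℝ × ℝ × ℝ => gMat p.1 * RMat p.2.1 * nMat p.2.2)
        ((volume.restrict (Set.univ ×ˢ Set.Ioo (-(π / 4)) (π / 4) ×ˢ Set.univ)).withDensity
          fun p => ENNReal.ofReal (Real.cos (2 * p.2.1))) = nuM.restrict Wset := by
  have hm := (MeasurableEquiv.prodAssoc : (ℝ × ℝ) × ℝ ≃ᵐ ℝ × ℝ × ℝ).measurable
  have hG : Measurable (fun p : ℝ × ℝ × ℝ => gMat p.1 * RMat p.2.1 * nMat p.2.2) := by
    unfold gMat RMat nMat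
    refine m2_measurable_mul (m2_measurable_mul ?_ ?_) ?_ <;>
      exact m2_measurable_mk (by fun_prop) (by fun_prop) (by fun_prop) (by fun_prop)
  have hskew := MeasurePreserving.skew_product fC_mp (μc := (volume : Measure ℝ))
    (μd := (volume : Measure ℝ))
    (g := fun p w => w + Real.sin p.2 / Real.cos p.2)
    (by simp only [Function.uncurry_def]; fun_prop)
    (Filter.Eventually.of_forall (fun p => map_add_vol _))
  rw [src_eq, nuM_W, Measure.map_map hG hm, ← hskew.map_eq,
    Measure.map_map psiM_meas hskew.measurable]
  refine Measure.map_congr ?_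
  have hae : ∀ᵐ p ∂((volume.restrict sC).withDensity
      fun p : ℝ × ℝ => ENNReal.ofReal (Real.cos (2 * p.2))), p ∈ sC :=
    (withDensity_absolutelyContinuous _ _).ae_le (ae_restrict_mem sC_meas)
  filter_upwards [Measure.quasiMeasurePreserving_fst.ae hae] with p hp
  have hc := (cos_pos_of_sC hp).ne'
  obtain ⟨⟨t, θ⟩, u⟩ := p
  simp only at hc
  have hsc := Real.sin_sq_add_cos_sq θ
  have he := (Real.exp_pos t).ne'
  ext i j
  fin_cases i <;> fin_cases j <;>
    simp [Function.comp, psiM, fC, gMat, RMat, nMat, Matrix.mul_apply, Fin.sum_univ_two,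
      MeasurableEquiv.prodAssoc, Real.exp_neg]
  · field_simp
    linear_combination hsc
  · field_simp
    ring

def sTest : Set M2 := {A | A.det = 1 ∧ A 0 1 ∈ Set.Icc (0 : ℝ) 1 ∧ A 1 1 ∈ Set.Icc (1 : ℝ) 2 ∧
  A 1 0 / A 1 1 ∈ Set.Icc (0 : ℝ) 1}

def bTest : Set ((ℝ × ℝ) × ℝ) := (Set.Icc (0 : ℝ) 1 ×ˢ Set.Icc (1 : ℝ) 2) ×ˢ Set.Icc (0 : ℝ) 1

theorem sTest_meas : MeasurableSet sTest := by
  have h1 : MeasurableSet {A : M2 | A 0 1 ∈ Set.Icc (0 : ℝ) 1} :=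
    m2_measurable_entry 0 1 measurableSet_Icc
  have h2 : MeasurableSet {A : M2 | A 1 1 ∈ Set.Icc (1 : ℝ) 2} :=
    m2_measurable_entry 1 1 measurableSet_Icc
  have h3 : MeasurableSet {A : M2 | A 1 0 / A 1 1 ∈ Set.Icc (0 : ℝ) 1} :=
    ((m2_measurable_entry 1 0).div (m2_measurable_entry 1 1)) measurableSet_Icc
  exact m2_measurableSet_det.inter (h1.inter (h2.inter h3))

theorem nuM_sTest : nuM sTest = 1 := by
  rw [nuM, Measure.map_apply psiM_meas sTest_meas]
  have : psiM ⁻¹' sTest = bTest := by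
    ext p
    constructor
    · rintro ⟨_, h1, h2, h3⟩
      have hd : p.1.2 ≠ 0 := by
        have : (1 : ℝ) ≤ p.1.2 := h2.1
        linarith
      refine ⟨⟨h1, h2⟩, ?_⟩
      have : psiM p 1 0 / psiM p 1 1 = p.2 := by simp [psiM, hd]
      rwa [this] at h3
    · rintro ⟨⟨h1, h2⟩, h3⟩
      have hd : p.1.2 ≠ 0 := by
        have : (1 : ℝ) ≤ p.1.2 := h2.1
        linarith
      refine ⟨psiM_det p hd, h1, h2, ?_⟩
      have : psiM p 1 0 / psiM p 1 1 = p.2 := by simp [psiM, hd]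
      rwa [this]
  rw [this, bTest, Measure.volume_eq_prod, Measure.prod_prod, Measure.volume_eq_prod,
    Measure.prod_prod]
  simp [Real.volume_Icc]
  norm_num

theorem sTest_sub : sTest ⊆ psiM '' bTest := by
  rintro A ⟨h0, h1, h2, h3⟩
  refine ⟨((A 0 1, A 1 1), A 1 0 / A 1 1), ⟨⟨h1, h2⟩, h3⟩, ?_⟩
  have hd : A 1 1 ≠ 0 := by linarith [h2.1]
  rw [Matrix.det_fin_two] at h0
  ext i j
  fin_cases i <;> fin_cases j <;> simp [psiM]
  · field_simp
    linear_combination -h0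
  · field_simp

theorem bTest_compact : IsCompact (psiM '' bTest) := by
  refine ((isCompact_Icc.prod isCompact_Icc).prod isCompact_Icc).image_of_continuousOn ?_
  have h : ∀ p ∈ bTest, p.1.2 ≠ 0 := by
    rintro p ⟨⟨_, h2⟩, _⟩
    have : (1 : ℝ) ≤ p.1.2 := h2.1
    linarith
  refine continuousOn_pi.2 (fun i => continuousOn_pi.2 (fun j => ?_))
  fin_cases i <;> fin_cases j <;> simp only [psiM]
  · refine ContinuousOn.add (ContinuousOn.div continuousOn_const (by fun_prop) h) (by fun_prop)
  · show ContinuousOn (fun p : (ℝ × ℝ) × ℝ => p.1.1) _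
    fun_prop
  · show ContinuousOn (fun p : (ℝ × ℝ) × ℝ => p.2 * p.1.2) _
    fun_prop
  · show ContinuousOn (fun p : (ℝ × ℝ) × ℝ => p.1.2) _
    fun_prop

theorem sf_of_cpt (μ : Measure M2) (hcpt : ∀ K : Set M2, IsCompact K → μ K < ⊤) :
    SigmaFinite μ := by
  have : LocallyCompactSpace M2 := inferInstanceAs (LocallyCompactSpace (Fin 2 → Fin 2 → ℝ))
  have : SecondCountableTopology M2 :=
    inferInstanceAs (SecondCountableTopology (Fin 2 → Fin 2 → ℝ))
  have : IsLocallyFiniteMeasure μ := ⟨fun x => by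
    obtain ⟨K, hK, hx⟩ := exists_compact_mem_nhds x
    exact ⟨K, hx, hcpt K hK⟩⟩
  infer_instance

/-- Proposition 3.1 (second assertion): in the coordinates `(t, θ, u) ↦ g_t R_θ n_u`
on `W`, a suitably scaled Haar measure of `SL(2,ℝ)` (modelled as a nonzero measure on
`2×2` matrices, carried by the set `{det = 1}`, finite on compact sets, and invariant
under left translation by `SL(2,ℝ)`) restricted to `W` is `cos 2θ dt dθ du`. -/
theorem stmt3 (μ : Measure (Matrix (Fin 2) (Fin 2) ℝ))
    (hμ0 : μ ≠ 0)
    (hsupp : μ {A | A.det ≠ 1} = 0)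
    (hcpt : ∀ K : Set (Matrix (Fin 2) (Fin 2) ℝ), IsCompact K → μ K < ⊤)
    (hinv : ∀ B : Matrix (Fin 2) (Fin 2) ℝ, B.det = 1 →
      Measure.map (fun A => B * A) μ = μ) :
    ∃ c : ℝ, 0 < c ∧
      Measure.map (fun p : ℝ × ℝ × ℝ => gMat p.1 * RMat p.2.1 * nMat p.2.2)
        ((volume.restrict (Set.univ ×ˢ Set.Ioo (-(π / 4)) (π / 4) ×ˢ Set.univ)).withDensity
          fun p => ENNReal.ofReal (Real.cos (2 * p.2.1)))
        = ENNReal.ofReal c • μ.restrict Wset := by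
  have := sf_of_cpt μ hcpt
  have key := m2_unique μ nuM hsupp nuM_supp hinv nuM_inv sTest
    (by rw [nuM_sTest]; exact one_ne_zero) (by rw [nuM_sTest]; exact ENNReal.one_ne_top)
  rw [nuM_sTest, div_one] at key
  have hfin : μ sTest ≠ ⊤ := ((measure_mono sTest_sub).trans_lt (hcpt _ bTest_compact)).ne
  have h0 : μ sTest ≠ 0 := by
    intro h
    rw [h, zero_smul] at key
    exact hμ0 key
  generalize μ sTest = k at *
  refine ⟨k⁻¹.toReal, ENNReal.toReal_pos (ENNReal.inv_ne_zero.2 hfin) (ENNReal.inv_ne_top.2 h0), ?_⟩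
  rw [lhs_eq, ENNReal.ofReal_toReal (ENNReal.inv_ne_top.2 h0), key, Measure.restrict_smul,
    smul_smul, ENNReal.inv_mul_cancel h0 hfin, one_smul]
end

section
/- Let v, v' ∈ ℝ² with v ≠ ±v'. For τ > 0, let E(v, v', τ) be the set of γ ∈ SL(2,ℝ) with operator norm ‖γ‖ ≤ 2 and exp(−τ) ≤ ‖γ·v‖ ≤ exp(τ) and exp(−τ) ≤ ‖γ·v'‖ ≤ exp(τ). Then for every δ > 0 there is a constant C (depending only on δ) such that whenever ‖v − v'‖ ≥ δ and ‖v + v'‖ ≥ δ, the Haar measure of E(v, v', τ) is at most C · τ^{3/2} for all sufficiently small τ > 0. -/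
open Real MeasureTheory Matrix Set Filter

/-- Operator norm of a `2×2` real matrix acting on Euclidean `ℝ²`. -/
noncomputable def opNorm (A : Matrix (Fin 2) (Fin 2) ℝ) : ℝ :=
  ‖Matrix.toEuclideanCLM (𝕜 := ℝ) A‖

/-- The set `E(v, v', τ)` of `γ ∈ SL(2,ℝ)` with `‖γ‖ ≤ 2` and
`exp(-τ) ≤ ‖γ·v‖, ‖γ·v'‖ ≤ exp τ`. -/
noncomputable def Eset (v v' : Fin 2 → ℝ) (τ : ℝ) : Set (Matrix (Fin 2) (Fin 2) ℝ) :=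
  {γ | γ.det = 1 ∧ opNorm γ ≤ 2 ∧
    Real.exp (-τ) ≤ vnorm (γ.mulVec v) ∧ vnorm (γ.mulVec v) ≤ Real.exp τ ∧
    Real.exp (-τ) ≤ vnorm (γ.mulVec v') ∧ vnorm (γ.mulVec v') ≤ Real.exp τ}


lemma aux_vol_alpha (s h : ℝ) (hh : 0 ≤ h) :
    volume {α : ℝ | |α ^ 2 - s| ≤ h} ≤ ENNReal.ofReal (2 * √(2 * h)) := by
  set a := √(max (s - h) 0) with ha
  set b := √(max (s + h) 0) with hb
  have ha0 : 0 ≤ a := Real.sqrt_nonneg _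
  have hb0 : 0 ≤ b := Real.sqrt_nonneg _
  have ha2 : a ^ 2 = max (s - h) 0 := Real.sq_sqrt (le_max_right _ _)
  have hb2 : b ^ 2 = max (s + h) 0 := Real.sq_sqrt (le_max_right _ _)
  have hab : b - a ≤ √(2 * h) := by
    apply Real.le_sqrt_of_sq_le
    have h1 : a ≤ b := Real.sqrt_le_sqrt (max_le_max (by linarith) le_rfl)
    have h2 : b ^ 2 - a ^ 2 ≤ 2 * h := by
      rw [ha2, hb2]
      rcases max_cases (s - h) 0 with h1 | h1 <;> rcases max_cases (s + h) 0 with h2 | h2 <;> linarith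
    nlinarith
  have hsub : {α : ℝ | |α ^ 2 - s| ≤ h} ⊆ Icc a b ∪ Icc (-b) (-a) := by
    intro α hα
    simp only [mem_ofPred_eq, abs_le] at hα
    have h1 : a ≤ |α| := by
      rw [ha, Real.sqrt_le_left (abs_nonneg _), sq_abs]
      exact max_le (by linarith) (sq_nonneg _)
    have h2 : |α| ≤ b := by
      apply Real.le_sqrt_of_sq_le
      rw [sq_abs]
      exact le_max_of_le_left (by linarith)
    rcases abs_cases α with h | h
    · left; constructor <;> linarith
    · right; constructor <;> linarith
  calc volume {α : ℝ | |α ^ 2 - s| ≤ h} ≤ volume (Icc a b ∪ Icc (-b) (-a)) := measure_mono hsub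
    _ ≤ volume (Icc a b) + volume (Icc (-b) (-a)) := measure_union_le _ _
    _ = ENNReal.ofReal (b - a) + ENNReal.ofReal (b - a) := by
        rw [Real.volume_Icc, Real.volume_Icc]; congr 2; ring
    _ ≤ ENNReal.ofReal (√(2 * h)) + ENNReal.ofReal (√(2 * h)) := by gcongr
    _ = ENNReal.ofReal (2 * √(2 * h)) := by
        rw [← ENNReal.ofReal_add (by positivity) (by positivity)]; congr 1; ring

noncomputable def lin2 (a b c d : ℝ) : (ℝ × ℝ) →ₗ[ℝ] (ℝ × ℝ) :=
  Matrix.toLin (Module.Basis.finTwoProd ℝ) (Module.Basis.finTwoProd ℝ) !![a, b; c, d]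

lemma lin2_apply (a b c d : ℝ) (x : ℝ × ℝ) :
    lin2 a b c d x = (a * x.1 + b * x.2, c * x.1 + d * x.2) :=
  Matrix.toLin_finTwoProd_apply _ _ _ _ _

lemma lin2_det (a b c d : ℝ) : LinearMap.det (lin2 a b c d) = a * d - b * c := by
  rw [lin2, LinearMap.det_toLin, Matrix.det_fin_two_of]

lemma aux_vol_q (p0 p1 d τ : ℝ) (h1 : 1 / 4 ≤ p0 ^ 2 + p1 ^ 2) (h2 : p0 ^ 2 + p1 ^ 2 ≤ 3)
    (hd : |d| ≤ 3 / 2) (hτ : 0 < τ) (hτ' : τ < 1 / 8) :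
    volume {q : ℝ × ℝ | |d * (p0 ^ 2 + p1 ^ 2) - (p0 * q.2 - p1 * q.1)| ≤ 12 * τ ∧
      |q.1 ^ 2 + q.2 ^ 2 - (p0 ^ 2 + p1 ^ 2)| ≤ 16 * τ} ≤ ENNReal.ofReal (3840 * (τ * √τ)) := by
  set P := p0 ^ 2 + p1 ^ 2 with hP
  have hdet : LinearMap.det (lin2 p0 p1 (-p1) p0) = P := by rw [lin2_det, hP]; ring
  have hsub : {q : ℝ × ℝ | |d * P - (p0 * q.2 - p1 * q.1)| ≤ 12 * τ ∧
      |q.1 ^ 2 + q.2 ^ 2 - P| ≤ 16 * τ} ⊆ (lin2 p0 p1 (-p1) p0) ⁻¹'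
      ({α : ℝ | |α ^ 2 - (P ^ 2 - d ^ 2 * P ^ 2)| ≤ 200 * τ} ×ˢ
        Icc (d * P - 12 * τ) (d * P + 12 * τ)) := by
    rintro ⟨q0, q1⟩ ⟨ha, hb⟩
    simp only [abs_le] at ha hb hd
    simp only [mem_preimage, lin2_apply, mem_prod, mem_ofPred_eq, mem_Icc]
    set β := -p1 * q0 + p0 * q1 with hβ
    have hβ' : p0 * q1 - p1 * q0 = β := by rw [hβ]; ring
    rw [hβ'] at ha
    refine ⟨?_, by linarith [ha.2], by linarith [ha.1]⟩
    have hα : (p0 * q0 + p1 * q1) ^ 2 = P * (q0 ^ 2 + q1 ^ 2) - β ^ 2 := by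
      rw [hβ, hP]; ring
    rw [hα]
    have e : P * (q0 ^ 2 + q1 ^ 2) - β ^ 2 - (P ^ 2 - d ^ 2 * P ^ 2)
        = P * (q0 ^ 2 + q1 ^ 2 - P) + (d * P - β) * (d * P + β) := by ring
    rw [e]
    have e1 : |P * (q0 ^ 2 + q1 ^ 2 - P)| ≤ 3 * (16 * τ) := by
      rw [abs_mul]
      apply mul_le_mul _ (abs_le.2 hb) (abs_nonneg _) (by norm_num)
      rw [abs_of_nonneg (by linarith)]; exact h2
    have e2 : |(d * P - β) * (d * P + β)| ≤ (12 * τ) * 12 := by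
      rw [abs_mul]
      have : |d * P| ≤ 3 / 2 * 3 := by
        rw [abs_mul]
        apply mul_le_mul (abs_le.2 hd) _ (abs_nonneg _) (by norm_num)
        rw [abs_of_nonneg (by linarith)]; exact h2
      rw [abs_le] at this
      apply mul_le_mul (abs_le.2 ha) _ (abs_nonneg _) (by linarith)
      rw [abs_le]; constructor <;> linarith [this.1, this.2, ha.1, ha.2]
    refine (abs_add_le _ _).trans ?_
    linarith
  refine (measure_mono hsub).trans ?_
  rw [Measure.addHaar_preimage_linearMap _ (by rw [hdet]; linarith), hdet,
    Measure.volume_eq_prod, Measure.prod_prod, Real.volume_Icc]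
  have hs : √(2 * (200 * τ)) = 20 * √τ := by
    rw [show 2 * (200 * τ) = 20 ^ 2 * τ by ring, Real.sqrt_mul (by norm_num),
      Real.sqrt_sq (by norm_num)]
  calc _ ≤ ENNReal.ofReal 4 * (ENNReal.ofReal (2 * √(2 * (200 * τ))) * ENNReal.ofReal (24 * τ)) := by
        gcongr
        · rw [abs_of_nonneg (by positivity)]
          rw [inv_le_comm₀ (by linarith) (by norm_num)]; linarith
        · exact aux_vol_alpha _ _ (by linarith)
        · linarith
    _ = _ := by
        rw [← ENNReal.ofReal_mul (by positivity), ← ENNReal.ofReal_mul (by positivity), hs]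
        congr 1; ring

/-- Set of pairs of columns. -/
def Zset (d τ : ℝ) : Set ((ℝ × ℝ) × (ℝ × ℝ)) :=
  {x | 1 / 4 ≤ x.1.1 ^ 2 + x.1.2 ^ 2 ∧ x.1.1 ^ 2 + x.1.2 ^ 2 ≤ 3 ∧
    |d * (x.1.1 ^ 2 + x.1.2 ^ 2) - (x.1.1 * x.2.2 - x.1.2 * x.2.1)| ≤ 12 * τ ∧
      |x.2.1 ^ 2 + x.2.2 ^ 2 - (x.1.1 ^ 2 + x.1.2 ^ 2)| ≤ 16 * τ}

lemma measurableSet_Zset (d τ : ℝ) : MeasurableSet (Zset d τ) := by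
  apply IsClosed.measurableSet
  unfold Zset
  refine IsClosed.and ?_ (IsClosed.and ?_ (IsClosed.and ?_ ?_)) <;>
    exact isClosed_le (by fun_prop) (by fun_prop)

lemma vol_Zset (d τ : ℝ) (hd : |d| ≤ 3 / 2) (hτ : 0 < τ) (hτ' : τ < 1 / 8) :
    volume (Zset d τ) ≤ ENNReal.ofReal (61440 * (τ * √τ)) := by
  rw [Measure.volume_eq_prod, Measure.prod_apply (measurableSet_Zset d τ)]
  have hbd : ∀ p : ℝ × ℝ, volume (Prod.mk p ⁻¹' Zset d τ) ≤
      (Icc (-2 : ℝ) 2 ×ˢ Icc (-2 : ℝ) 2).indicator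
        (fun _ => ENNReal.ofReal (3840 * (τ * √τ))) p := by
    rintro ⟨p0, p1⟩
    by_cases h : 1 / 4 ≤ p0 ^ 2 + p1 ^ 2 ∧ p0 ^ 2 + p1 ^ 2 ≤ 3
    · rw [indicator_of_mem]
      · refine (measure_mono ?_).trans (aux_vol_q p0 p1 d τ h.1 h.2 hd hτ hτ')
        rintro q ⟨_, _, h3, h4⟩
        exact ⟨h3, h4⟩
      · simp only [mem_prod, mem_Icc]
        refine ⟨⟨?_, ?_⟩, ?_, ?_⟩ <;> nlinarith [h.2]
    · have : Prod.mk (p0, p1) ⁻¹' Zset d τ = ∅ := by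
        ext q
        simp only [mem_preimage, mem_empty_iff_false, iff_false]
        rintro ⟨h1, h2, _⟩
        exact h ⟨h1, h2⟩
      rw [this, measure_empty]; exact zero_le
  refine (lintegral_mono hbd).trans ?_
  rw [lintegral_indicator (measurableSet_Icc.prod measurableSet_Icc), lintegral_const,
    Measure.restrict_apply_univ, Measure.volume_eq_prod, Measure.prod_prod, Real.volume_Icc,
    ← ENNReal.ofReal_mul (by norm_num), ← ENNReal.ofReal_mul (by positivity)]
  apply ENNReal.ofReal_le_ofReal
  apply le_of_eq; ring

def transLin : ((ℝ × ℝ) × (ℝ × ℝ)) →ₗ[ℝ] ((ℝ × ℝ) × (ℝ × ℝ)) where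
  toFun x := ((x.1.1, x.2.1), (x.1.2, x.2.2))
  map_add' _ _ := rfl
  map_smul' _ _ := rfl

lemma transLin_det : LinearMap.det transLin * LinearMap.det transLin = 1 := by
  rw [← LinearMap.det_comp]
  have : transLin ∘ₗ transLin = LinearMap.id := rfl
  rw [this, LinearMap.det_id]

lemma vol_preimage (w0 w1 w0' w1' : ℝ) (h : w0 * w1' - w1 * w0' ≠ 0)
    (Z : Set ((ℝ × ℝ) × (ℝ × ℝ))) :
    volume {x : (ℝ × ℝ) × (ℝ × ℝ) |
      ((w0 * x.1.1 + w1 * x.1.2, w0 * x.2.1 + w1 * x.2.2),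
        (w0' * x.1.1 + w1' * x.1.2, w0' * x.2.1 + w1' * x.2.2)) ∈ Z} =
    ENNReal.ofReal (((w0 * w1' - w1 * w0') ^ 2)⁻¹) * volume Z := by
  set f := transLin ∘ₗ (LinearMap.prodMap (lin2 w0 w1 w0' w1') (lin2 w0 w1 w0' w1')) with hf
  have habs : |LinearMap.det f| = (w0 * w1' - w1 * w0') ^ 2 := by
    rw [hf, LinearMap.det_comp, LinearMap.det_prodMap, lin2_det, abs_mul]
    have := transLin_det
    have h1 : |LinearMap.det transLin| = 1 := by
      have h2 : |LinearMap.det transLin| ^ 2 = 1 := by rw [sq_abs, sq, this]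
      nlinarith [abs_nonneg (LinearMap.det transLin)]
    rw [h1, one_mul, ← sq, abs_of_nonneg (sq_nonneg _)]
  have hne : LinearMap.det f ≠ 0 := by
    rw [← abs_pos, habs]; positivity
  have i2 : (volume : Measure (ℝ × ℝ)).IsAddHaarMeasure := inferInstance
  have i4 : (volume : Measure ((ℝ × ℝ) × (ℝ × ℝ))).IsAddHaarMeasure := by
    rw [Measure.volume_eq_prod]; infer_instance
  rw [← habs, ← abs_inv, ← Measure.addHaar_preimage_linearMap _ hne]
  congr 1
  ext x
  simp [hf, transLin, lin2_apply]

/-- Squared Euclidean norm. -/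
def nsq (u : Fin 2 → ℝ) : ℝ := u 0 ^ 2 + u 1 ^ 2

def Eset' (v v' : Fin 2 → ℝ) (τ : ℝ) : Set (Matrix (Fin 2) (Fin 2) ℝ) :=
  {A | A.det = 1 ∧ (∀ i j, |A i j| ≤ 2) ∧
    (1 - 4 * τ ≤ nsq (A.mulVec v) ∧ nsq (A.mulVec v) ≤ 1 + 4 * τ) ∧
    (1 - 4 * τ ≤ nsq (A.mulVec v') ∧ nsq (A.mulVec v') ≤ 1 + 4 * τ)}

lemma entry_le_opNorm (A : Matrix (Fin 2) (Fin 2) ℝ) (i j : Fin 2) : |A i j| ≤ opNorm A := by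
  have h1 := (Matrix.toEuclideanCLM (𝕜 := ℝ) A).le_opNorm (EuclideanSpace.single j 1)
  rw [EuclideanSpace.norm_single, norm_one, mul_one] at h1
  have h2 := (PiLp.norm_apply_le (Matrix.toEuclideanCLM (𝕜 := ℝ) A (EuclideanSpace.single j 1)) i)
  have h3 : (Matrix.toEuclideanCLM (𝕜 := ℝ) A (EuclideanSpace.single j 1)) i = A i j := by
    simp [Matrix.ofLp_toEuclideanCLM]
  rw [h3, Real.norm_eq_abs] at h2
  exact h2.trans h1

lemma vnorm_bounds (u : Fin 2 → ℝ) (τ : ℝ) (hτ : 0 < τ) (hτ' : τ < 1 / 8)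
    (h1 : Real.exp (-τ) ≤ vnorm u) (h2 : vnorm u ≤ Real.exp τ) :
    1 - 4 * τ ≤ nsq u ∧ nsq u ≤ 1 + 4 * τ := by
  have h0 : 0 ≤ nsq u := by unfold nsq; positivity
  have hsq : vnorm u ^ 2 = nsq u := Real.sq_sqrt h0
  have e1 : Real.exp (-τ) ^ 2 = Real.exp (-(2 * τ)) := by
    rw [← Real.exp_nat_mul]; congr 1; push_cast; ring
  have e2 : Real.exp τ ^ 2 = Real.exp (2 * τ) := by
    rw [← Real.exp_nat_mul]; congr 1
  have f1 : Real.exp (-τ) ^ 2 ≤ vnorm u ^ 2 := pow_le_pow_left₀ (Real.exp_pos _).le h1 2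
  have f2 : vnorm u ^ 2 ≤ Real.exp τ ^ 2 := pow_le_pow_left₀ (Real.sqrt_nonneg _) h2 2
  rw [e1, hsq] at f1
  rw [e2, hsq] at f2
  have g1 := Real.add_one_le_exp (-(2 * τ))
  have g2 := Real.abs_exp_sub_one_sub_id_le (x := 2 * τ) (by rw [abs_of_pos (by linarith)]; linarith)
  rw [abs_le] at g2
  constructor
  · linarith
  · nlinarith [g2.2]

lemma Eset_subset (v v' : Fin 2 → ℝ) (τ : ℝ) (hτ : 0 < τ) (hτ' : τ < 1 / 8) :
    Eset v v' τ ⊆ Eset' v v' τ := by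
  rintro A ⟨h1, h2, h3, h4, h5, h6⟩
  exact ⟨h1, fun i j => (entry_le_opNorm A i j).trans h2, vnorm_bounds _ τ hτ hτ' h3 h4,
    vnorm_bounds _ τ hτ hτ' h5 h6⟩

lemma nsq_inv_bound (G : Matrix (Fin 2) (Fin 2) ℝ) (hG : G.det = 1) (hb : ∀ i j, |G i j| ≤ 2)
    (u : Fin 2 → ℝ) : nsq u ≤ 16 * nsq (G.mulVec u) := by
  rw [Matrix.det_fin_two] at hG
  have hsq : ∀ i j, G i j ^ 2 ≤ 4 := fun i j => by
    have := hb i j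
    rw [← sq_abs]; nlinarith [abs_nonneg (G i j)]
  simp only [nsq, Matrix.mulVec, dotProduct, Fin.sum_univ_two]
  set y0 := G 0 0 * u 0 + G 0 1 * u 1 with hy0
  set y1 := G 1 0 * u 0 + G 1 1 * u 1 with hy1
  have k0 : u 0 = G 1 1 * y0 - G 0 1 * y1 := by
    rw [hy0, hy1]; linear_combination (-(u 0)) * hG
  have k1 : u 1 = G 0 0 * y1 - G 1 0 * y0 := by
    rw [hy0, hy1]; linear_combination (-(u 1)) * hG
  have l0 : u 0 ^ 2 ≤ (G 1 1 ^ 2 + G 0 1 ^ 2) * (y0 ^ 2 + y1 ^ 2) := by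
    rw [k0]; nlinarith [sq_nonneg (G 1 1 * y1 + G 0 1 * y0)]
  have l1 : u 1 ^ 2 ≤ (G 0 0 ^ 2 + G 1 0 ^ 2) * (y0 ^ 2 + y1 ^ 2) := by
    rw [k1]; nlinarith [sq_nonneg (G 0 0 * y0 + G 1 0 * y1)]
  have hy : 0 ≤ y0 ^ 2 + y1 ^ 2 := by positivity
  nlinarith [mul_le_mul_of_nonneg_right (add_le_add (hsq 1 1) (hsq 0 1)) hy,
    mul_le_mul_of_nonneg_right (add_le_add (hsq 0 0) (hsq 1 0)) hy]

lemma d_bounds (G : Matrix (Fin 2) (Fin 2) ℝ) (v v' : Fin 2 → ℝ) (τ δ : ℝ) (hδ : 0 < δ)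
    (hτ : 0 < τ) (hτ' : τ < 1 / 8) (hτδ : τ < δ / 64) (h1 : δ ≤ vnorm (v - v'))
    (h2 : δ ≤ vnorm (v + v')) (hG : G ∈ Eset' v v' τ) :
    δ ^ 2 / 128 ≤ (v 0 * v' 1 - v 1 * v' 0) ^ 2 ∧ |v 0 * v' 1 - v 1 * v' 0| ≤ 3 / 2 := by
  obtain ⟨hdet, hb, ⟨a1, a2⟩, b1, b2⟩ := hG
  have hn : ∀ u : Fin 2 → ℝ, δ ≤ vnorm u → δ ^ 2 / 16 ≤ nsq (G.mulVec u) := by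
    intro u hu
    have := nsq_inv_bound G hdet hb u
    have h0 : 0 ≤ nsq u := by unfold nsq; positivity
    have hsq : vnorm u ^ 2 = nsq u := Real.sq_sqrt h0
    have := pow_le_pow_left₀ hδ.le hu 2
    linarith
  have m1 := hn _ h1
  have m2 := hn _ h2
  rw [Matrix.mulVec_sub] at m1
  rw [Matrix.mulVec_add] at m2
  have hd : (G.mulVec v) 0 * (G.mulVec v') 1 - (G.mulVec v) 1 * (G.mulVec v') 0
      = v 0 * v' 1 - v 1 * v' 0 := by
    rw [Matrix.det_fin_two] at hdet
    simp only [Matrix.mulVec, dotProduct, Fin.sum_univ_two]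
    linear_combination (v 0 * v' 1 - v 1 * v' 0) * hdet
  rw [← hd]
  simp only [nsq, Pi.sub_apply, Pi.add_apply] at a1 a2 b1 b2 m1 m2
  set x0 := (G.mulVec v) 0
  set x1 := (G.mulVec v) 1
  set y0 := (G.mulVec v') 0
  set y1 := (G.mulVec v') 1
  have key : (x0 * y1 - x1 * y0) ^ 2 =
    (x0 ^ 2 + x1 ^ 2) * (y0 ^ 2 + y1 ^ 2) - (x0 * y0 + x1 * y1) ^ 2 := by ring
  have m1' : 2 * (x0 * y0 + x1 * y1) ≤ (x0 ^ 2 + x1 ^ 2) + (y0 ^ 2 + y1 ^ 2) - δ ^ 2 / 16 := by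
    linarith
  have m2' : -(2 * (x0 * y0 + x1 * y1)) ≤ (x0 ^ 2 + x1 ^ 2) + (y0 ^ 2 + y1 ^ 2) - δ ^ 2 / 16 := by
    linarith
  generalize x0 ^ 2 + x1 ^ 2 = a at *
  generalize y0 ^ 2 + y1 ^ 2 = b at *
  generalize x0 * y0 + x1 * y1 = m at *
  generalize x0 * y1 - x1 * y0 = d at *
  constructor
  · have s1 : (2 * m) ^ 2 ≤ (a + b - δ ^ 2 / 16) ^ 2 := sq_le_sq' (by linarith) m1'
    have s2 : (a - b) ^ 2 ≤ (8 * τ) ^ 2 := sq_le_sq' (by linarith) (by linarith)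
    have s3 : (8 * τ) ^ 2 ≤ (8 * (δ / 64)) ^ 2 := by gcongr
    have s4 : δ ^ 2 / 16 * 1 ≤ δ ^ 2 / 16 * (2 * (a + b) - δ ^ 2 / 16) := by
      gcongr; linarith
    nlinarith
  · apply abs_le_of_sq_le_sq _ (by norm_num)
    rw [key]
    nlinarith [sq_nonneg m]

/-- matrix with given rows -/
def mat (x : (ℝ × ℝ) × (ℝ × ℝ)) : Matrix (Fin 2) (Fin 2) ℝ := !![x.1.1, x.1.2; x.2.1, x.2.2]

def detx (x : (ℝ × ℝ) × (ℝ × ℝ)) : ℝ := x.1.1 * x.2.2 - x.1.2 * x.2.1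

noncomputable def Bm (x : (ℝ × ℝ) × (ℝ × ℝ)) : Matrix (Fin 2) (Fin 2) ℝ :=
  (√(detx x))⁻¹ • mat x

def Uset : Set ((ℝ × ℝ) × (ℝ × ℝ)) :=
  (Icc (3 / 4 : ℝ) (5 / 4) ×ˢ Icc (-1 / 4 : ℝ) (1 / 4)) ×ˢ
    (Icc (-1 / 4 : ℝ) (1 / 4) ×ˢ Icc (3 / 4 : ℝ) (5 / 4))

lemma vol_Uset : volume Uset = ENNReal.ofReal (1 / 16) := by
  unfold Uset
  rw [Measure.volume_eq_prod, Measure.prod_prod, Measure.volume_eq_prod, Measure.prod_prod,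
    Measure.prod_prod]
  simp only [Real.volume_Icc]
  rw [← ENNReal.ofReal_mul (by norm_num), ← ENNReal.ofReal_mul (by norm_num),
    ← ENNReal.ofReal_mul (by norm_num)]
  norm_num

lemma measurableSet_Uset : MeasurableSet Uset :=
  (measurableSet_Icc.prod measurableSet_Icc).prod (measurableSet_Icc.prod measurableSet_Icc)

lemma detx_bounds {x : (ℝ × ℝ) × (ℝ × ℝ)} (hx : x ∈ Uset) : 1 / 2 ≤ detx x ∧ detx x ≤ 2 := by
  obtain ⟨⟨x00, x01⟩, x10, x11⟩ := x
  simp only [Uset, mem_prod, mem_Icc] at hx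
  obtain ⟨⟨⟨a1, a2⟩, b1, b2⟩, ⟨c1, c2⟩, d1, d2⟩ := hx
  have h : |x01 * x10| ≤ 1 / 4 * (1 / 4) := by
    rw [abs_mul]
    apply mul_le_mul _ _ (abs_nonneg _) (by norm_num) <;> rw [abs_le] <;> constructor <;> linarith
  rw [abs_le] at h
  simp only [detx]
  constructor <;> nlinarith [h.1, h.2]

lemma Bm_det {x : (ℝ × ℝ) × (ℝ × ℝ)} (hx : x ∈ Uset) : (Bm x).det = 1 := by
  have h := (detx_bounds hx).1
  have : (mat x).det = detx x := by rw [mat, Matrix.det_fin_two_of, detx]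
  rw [Bm, Matrix.det_smul, this, Fintype.card_fin, inv_pow, Real.sq_sqrt (by linarith),
    inv_mul_cancel₀ (by linarith)]

lemma Bm_entry {x : (ℝ × ℝ) × (ℝ × ℝ)} (hx : x ∈ Uset) (i j : Fin 2) : |Bm x i j| ≤ 2 := by
  have h := (detx_bounds hx).1
  have h1 : (√(detx x))⁻¹ ≤ 8 / 5 := by
    rw [inv_le_comm₀ (Real.sqrt_pos.2 (by linarith)) (by norm_num)]
    apply Real.le_sqrt_of_sq_le
    norm_num; linarith
  have h2 : |mat x i j| ≤ 5 / 4 := by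
    obtain ⟨⟨x00, x01⟩, x10, x11⟩ := x
    simp only [Uset, mem_prod, mem_Icc] at hx
    obtain ⟨⟨⟨a1, a2⟩, b1, b2⟩, ⟨c1, c2⟩, d1, d2⟩ := hx
    fin_cases i <;> fin_cases j <;> simp [mat, abs_le] <;> constructor <;> linarith
  rw [Bm, Matrix.smul_apply, smul_eq_mul, abs_mul, abs_of_nonneg (by positivity)]
  calc _ ≤ (8 / 5 : ℝ) * (5 / 4) := by gcongr
    _ = 2 := by norm_num

def Kset : Set (Matrix (Fin 2) (Fin 2) ℝ) := {A | ∀ i j, A i j ∈ Icc (-8 : ℝ) 8}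

lemma isCompact_Kset : IsCompact Kset := by
  have : IsCompact (Set.pi univ (fun _ : Fin 2 => Set.pi univ (fun _ : Fin 2 => Icc (-8 : ℝ) 8))) :=
    isCompact_univ_pi fun _ => isCompact_univ_pi fun _ => isCompact_Icc
  have e : Kset = (Set.pi univ (fun _ : Fin 2 => Set.pi univ
      (fun _ : Fin 2 => Icc (-8 : ℝ) 8)) : Set (Fin 2 → Fin 2 → ℝ)) := by
    ext A
    constructor
    · intro h i _ j _
      exact h i j
    · intro h i j
      exact h i trivial j trivial
  rw [e]
  exact this

lemma mem_Kset {x : (ℝ × ℝ) × (ℝ × ℝ)} (hx : x ∈ Uset) {v v' : Fin 2 → ℝ} {τ : ℝ}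
    {A : Matrix (Fin 2) (Fin 2) ℝ} (hA : Bm x * A ∈ Eset' v v' τ) : A ∈ Kset := by
  obtain ⟨_, hb, _⟩ := hA
  have hB := Bm_entry hx
  have e : A = (Bm x).adjugate * (Bm x * A) := by
    rw [← Matrix.mul_assoc, Matrix.adjugate_mul, Bm_det hx, one_smul, one_mul]
  have hadj : ∀ i j, |(Bm x).adjugate i j| ≤ 2 := by
    intro i j
    rw [Matrix.adjugate_fin_two]
    fin_cases i <;> fin_cases j <;> simp [hB]
  intro i j
  rw [mem_Icc, ← abs_le, e, Matrix.mul_apply, Fin.sum_univ_two]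
  refine (abs_add_le _ _).trans ?_
  rw [abs_mul, abs_mul]
  have k : ∀ l, |(Bm x).adjugate i l| * |(Bm x * A) l j| ≤ 2 * 2 := fun l =>
    mul_le_mul (hadj i l) (hb l j) (abs_nonneg _) (by norm_num)
  linarith [k 0, k 1]

lemma nsq_Bm {x : (ℝ × ℝ) × (ℝ × ℝ)} (hx : x ∈ Uset) (A : Matrix (Fin 2) (Fin 2) ℝ)
    (v : Fin 2 → ℝ) : detx x * nsq ((Bm x * A).mulVec v) = nsq ((mat x).mulVec (A.mulVec v)) := by
  have h := (detx_bounds hx).1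
  rw [← Matrix.mulVec_mulVec, Bm, Matrix.smul_mulVec]
  have h2 : (√(detx x)) ^ 2 = detx x := Real.sq_sqrt (by linarith)
  have h3 : √(detx x) ≠ 0 := (Real.sqrt_pos.2 (by linarith)).ne'
  simp only [nsq, Pi.smul_apply, smul_eq_mul, mul_pow, inv_pow, h2]
  have : detx x ≠ 0 := by linarith
  field_simp

lemma mem_Z {x : (ℝ × ℝ) × (ℝ × ℝ)} (hx : x ∈ Uset) {v v' : Fin 2 → ℝ} {τ : ℝ}
    (hτ : 0 < τ) (hτ' : τ < 1 / 8) (hd : |v 0 * v' 1 - v 1 * v' 0| ≤ 3 / 2)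
    {A : Matrix (Fin 2) (Fin 2) ℝ} (hA : Bm x * A ∈ Eset' v v' τ) (hAd : A.det = 1) :
    (((A.mulVec v) 0 * x.1.1 + (A.mulVec v) 1 * x.1.2,
      (A.mulVec v) 0 * x.2.1 + (A.mulVec v) 1 * x.2.2),
     ((A.mulVec v') 0 * x.1.1 + (A.mulVec v') 1 * x.1.2,
      (A.mulVec v') 0 * x.2.1 + (A.mulVec v') 1 * x.2.2)) ∈
      Zset (v 0 * v' 1 - v 1 * v' 0) τ := by
  obtain ⟨_, _, ⟨a1, a2⟩, b1, b2⟩ := hA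
  have hv := nsq_Bm hx A v
  have hv' := nsq_Bm hx A v'
  obtain ⟨t1, t2⟩ := detx_bounds hx
  have hw : (A.mulVec v) 0 * (A.mulVec v') 1 - (A.mulVec v) 1 * (A.mulVec v') 0
      = v 0 * v' 1 - v 1 * v' 0 := by
    rw [Matrix.det_fin_two] at hAd
    simp only [Matrix.mulVec, dotProduct, Fin.sum_univ_two]
    linear_combination (v 0 * v' 1 - v 1 * v' 0) * hAd
  have hm : ∀ w : Fin 2 → ℝ, nsq ((mat x).mulVec w) =
      (w 0 * x.1.1 + w 1 * x.1.2) ^ 2 + (w 0 * x.2.1 + w 1 * x.2.2) ^ 2 := by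
    intro w
    simp only [nsq, mat, Matrix.mulVec, dotProduct, Fin.sum_univ_two]
    simp
    ring
  rw [hm] at hv hv'
  generalize nsq ((Bm x * A).mulVec v) = a at *
  generalize nsq ((Bm x * A).mulVec v') = b at *
  generalize A.mulVec v = w at *
  generalize A.mulVec v' = w' at *
  have hp : (w 0 * x.1.1 + w 1 * x.1.2) * (w' 0 * x.2.1 + w' 1 * x.2.2) -
      (w 0 * x.2.1 + w 1 * x.2.2) * (w' 0 * x.1.1 + w' 1 * x.1.2) =
      detx x * (v 0 * v' 1 - v 1 * v' 0) := by
    rw [← hw, detx]; ring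
  simp only [Zset, mem_ofPred_eq]
  rw [hp, ← hv, ← hv']
  generalize v 0 * v' 1 - v 1 * v' 0 = d at *
  generalize detx x = t at *
  refine ⟨by nlinarith, by nlinarith, ?_, ?_⟩
  · rw [show d * (t * a) - t * d = d * (t * (a - 1)) by ring, abs_mul]
    calc |d| * |t * (a - 1)| ≤ 3 / 2 * (2 * (4 * τ)) := by
          apply mul_le_mul hd _ (abs_nonneg _) (by norm_num)
          rw [abs_mul]
          apply mul_le_mul _ _ (abs_nonneg _) (by norm_num) <;> rw [abs_le] <;>
            constructor <;> linarith
      _ = 12 * τ := by ring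
  · rw [show t * b - t * a = t * (b - a) by ring, abs_mul]
    calc |t| * |b - a| ≤ 2 * (8 * τ) := by
          apply mul_le_mul _ _ (abs_nonneg _) (by norm_num) <;> rw [abs_le] <;>
            constructor <;> linarith
      _ = 16 * τ := by ring

lemma measurable_entry (i j : Fin 2) :
    Measurable (fun A : Matrix (Fin 2) (Fin 2) ℝ => A i j) :=
  (measurable_pi_apply (X := fun _ : Fin 2 => ℝ) j).comp
    (measurable_pi_apply (X := fun _ : Fin 2 => (Fin 2 → ℝ)) i)

lemma measurable_matrix {α : Type*} [MeasurableSpace α] {f : α → Matrix (Fin 2) (Fin 2) ℝ}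
    (h : ∀ i j, Measurable fun a => f a i j) : Measurable f :=
  measurable_pi_iff.2 fun i => measurable_pi_iff.2 fun j => h i j

lemma measurableSet_Kset : MeasurableSet Kset := by
  unfold Kset
  refine measurableSet_setOfPred.2 ?_
  exact Measurable.forall fun i => Measurable.forall fun j =>
    measurableSet_setOfPred.1 (measurable_entry i j measurableSet_Icc)

lemma measurable_nsq (v : Fin 2 → ℝ) :
    Measurable (fun A : Matrix (Fin 2) (Fin 2) ℝ => nsq (A.mulVec v)) := by
  have := measurable_entry
  simp only [nsq, Matrix.mulVec, dotProduct, Fin.sum_univ_two]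
  fun_prop

lemma measurableSet_Eset' (v v' : Fin 2 → ℝ) (τ : ℝ) : MeasurableSet (Eset' v v' τ) := by
  have he := measurable_entry
  have h1 := measurable_nsq v
  have h2 := measurable_nsq v'
  unfold Eset'
  refine MeasurableSet.inter ?_ (MeasurableSet.inter ?_ (MeasurableSet.inter
    (MeasurableSet.inter ?_ ?_) (MeasurableSet.inter ?_ ?_)))
  · simp only [Matrix.det_fin_two]
    exact measurableSet_eq_fun (by fun_prop) (by fun_prop)
  · refine measurableSet_setOfPred.2 ?_
    exact Measurable.forall fun i => Measurable.forall fun j =>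
      measurableSet_setOfPred.1 (measurableSet_le (he i j).abs measurable_const)
  · exact measurableSet_le measurable_const h1
  · exact measurableSet_le h1 measurable_const
  · exact measurableSet_le measurable_const h2
  · exact measurableSet_le h2 measurable_const

lemma measurable_Bmul :
    Measurable (fun z : ((ℝ × ℝ) × (ℝ × ℝ)) × Matrix (Fin 2) (Fin 2) ℝ => Bm z.1 * z.2) := by
  have he : ∀ i j, Measurable
      (fun z : ((ℝ × ℝ) × (ℝ × ℝ)) × Matrix (Fin 2) (Fin 2) ℝ => z.2 i j) :=
    fun i j => (measurable_entry i j).comp measurable_snd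
  have hd : Measurable detx := by unfold detx; fun_prop
  have hm : ∀ i j, Measurable fun x => mat x i j := by
    intro i j
    fin_cases i <;> fin_cases j <;> simp [mat] <;> fun_prop
  apply measurable_matrix
  intro i j
  simp only [Matrix.mul_apply, Fin.sum_univ_two, Bm, Matrix.smul_apply, smul_eq_mul]
  fun_prop

lemma measurable_mul_left (B : Matrix (Fin 2) (Fin 2) ℝ) :
    Measurable (fun A : Matrix (Fin 2) (Fin 2) ℝ => B * A) := by
  have he := measurable_entry
  apply measurable_matrix
  intro i j
  simp only [Matrix.mul_apply, Fin.sum_univ_two]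
  fun_prop

/-- Proposition 3.3: the Haar measure of `E(v, v', τ)` is `O(τ^{3/2})` for small `τ`,
uniformly over `v, v'` with `‖v ± v'‖` bounded away from `0`. Haar measure on
`SL(2,ℝ)` is modelled as a nonzero measure on `2×2` matrices carried by
`{det = 1}`, finite on compact sets, and invariant under left translation. -/
theorem stmt5 (μ : Measure (Matrix (Fin 2) (Fin 2) ℝ))
    (hμ0 : μ ≠ 0)
    (hsupp : μ {A | A.det ≠ 1} = 0)
    (hcpt : ∀ K : Set (Matrix (Fin 2) (Fin 2) ℝ), IsCompact K → μ K < ⊤)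
    (hinv : ∀ B : Matrix (Fin 2) (Fin 2) ℝ, B.det = 1 →
      Measure.map (fun A => B * A) μ = μ) :
    ∀ δ > (0:ℝ), ∃ C > (0:ℝ), ∃ τ₀ > (0:ℝ), ∀ v v' : Fin 2 → ℝ,
      δ ≤ vnorm (v - v') → δ ≤ vnorm (v + v') →
      ∀ τ : ℝ, 0 < τ → τ < τ₀ →
        μ (Eset v v' τ) ≤ ENNReal.ofReal (C * τ ^ ((3:ℝ)/2)) := by
  intro δ hδ
  set κ := μ Kset with hκ
  have hκfin : κ < ⊤ := hcpt _ isCompact_Kset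
  set C₁ : ℝ := 16 * (128 / δ ^ 2 * 61440) with hC₁
  have hC₁0 : 0 < C₁ := by positivity
  refine ⟨C₁ * κ.toReal + 1, by positivity, min (1 / 8) (δ / 64), by positivity, ?_⟩
  intro v v' h1 h2 τ hτ hττ
  have hτ8 : τ < 1 / 8 := lt_of_lt_of_le hττ (min_le_left _ _)
  have hτδ : τ < δ / 64 := lt_of_lt_of_le hττ (min_le_right _ _)
  refine (measure_mono (Eset_subset v v' τ hτ hτ8)).trans ?_
  by_cases hne : (Eset' v v' τ).Nonempty
  swap
  · rw [Set.not_nonempty_iff_eq_empty.1 hne, measure_empty]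
    exact zero_le
  obtain ⟨G, hG⟩ := hne
  obtain ⟨hdl, hdu⟩ := d_bounds G v v' τ δ hδ hτ hτ8 hτδ h1 h2 hG
  set d := v 0 * v' 1 - v 1 * v' 0 with hd
  set E := Eset' v v' τ with hE
  have hEm : MeasurableSet E := measurableSet_Eset' v v' τ
  have : IsFiniteMeasure (μ.restrict Kset) :=
    ⟨by rw [Measure.restrict_apply_univ]; exact hκfin⟩
  set S : Set (((ℝ × ℝ) × (ℝ × ℝ)) × Matrix (Fin 2) (Fin 2) ℝ) :=
    {z | z.1 ∈ Uset ∧ Bm z.1 * z.2 ∈ E} with hS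
  have hSm : MeasurableSet S :=
    (measurable_fst measurableSet_Uset).inter (measurable_Bmul hEm)
  have hslice : ∀ x ∈ Uset, μ.restrict Kset (Prod.mk x ⁻¹' S) = μ E := by
    intro x hx
    have e1 : Prod.mk x ⁻¹' S = (fun A => Bm x * A) ⁻¹' E := by
      ext A
      exact ⟨fun h => h.2, fun h => ⟨hx, h⟩⟩
    have hmeas : Measurable (fun A : Matrix (Fin 2) (Fin 2) ℝ => Bm x * A) :=
      measurable_mul_left _
    rw [Measure.restrict_apply (measurable_prodMk_left hSm), e1, inter_eq_self_of_subset_left,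
      ← Measure.map_apply hmeas hEm, hinv _ (Bm_det hx)]
    intro A hA
    exact mem_Kset hx hA
  have hlow : ENNReal.ofReal (1 / 16) * μ E ≤ (volume.prod (μ.restrict Kset)) S := by
    rw [Measure.prod_apply hSm, ← vol_Uset, mul_comm, ← setLIntegral_const]
    refine le_trans ?_ (setLIntegral_le_lintegral Uset _)
    exact setLIntegral_mono' measurableSet_Uset fun x hx => (hslice x hx).ge
  have hd2 : 0 < d ^ 2 := lt_of_lt_of_le (by positivity) hdl
  have hup : (volume.prod (μ.restrict Kset)) S ≤
      ENNReal.ofReal (128 / δ ^ 2 * (61440 * (τ * √τ))) * κ := by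
    rw [Measure.prod_apply_symm hSm, hκ, ← Measure.restrict_apply_univ, ← lintegral_const]
    refine lintegral_mono fun A => ?_
    by_cases hA : A.det = 1
    · have hw : (A.mulVec v) 0 * (A.mulVec v') 1 - (A.mulVec v) 1 * (A.mulVec v') 0 = d := by
        rw [Matrix.det_fin_two] at hA
        simp only [hd, Matrix.mulVec, dotProduct, Fin.sum_univ_two]
        linear_combination (v 0 * v' 1 - v 1 * v' 0) * hA
      have hvp := vol_preimage ((A.mulVec v) 0) ((A.mulVec v) 1) ((A.mulVec v') 0)
        ((A.mulVec v') 1) (by rw [hw]; exact fun h => by rw [h] at hd2; norm_num at hd2) (Zset d τ)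
      refine (measure_mono (fun x hx => mem_Z hx.1 hτ hτ8 hdu hx.2 hA)).trans (hvp.le.trans ?_)
      rw [hw, ENNReal.ofReal_mul (by positivity)]
      gcongr
      · rw [inv_le_comm₀ hd2 (by positivity), inv_div]; exact hdl
      · exact vol_Zset d τ hdu hτ hτ8
    · have : (fun x => (x, A)) ⁻¹' S = ∅ := by
        ext x
        simp only [mem_preimage, mem_empty_iff_false, iff_false]
        rintro ⟨hx, hx2⟩
        have := hx2.1
        rw [Matrix.det_mul, Bm_det hx, one_mul] at this
        exact hA this
      rw [this, measure_empty]
      exact zero_le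
  have hpow : τ ^ ((3 : ℝ) / 2) = τ * √τ := by
    rw [show (3 : ℝ) / 2 = 1 + 1 / 2 by norm_num, Real.rpow_add hτ, Real.rpow_one,
      Real.sqrt_eq_rpow]
  have hfin := hlow.trans hup
  calc μ E = ENNReal.ofReal 16 * (ENNReal.ofReal (1 / 16) * μ E) := by
        rw [← mul_assoc, ← ENNReal.ofReal_mul (by norm_num)]; norm_num
    _ ≤ ENNReal.ofReal 16 * (ENNReal.ofReal (128 / δ ^ 2 * (61440 * (τ * √τ))) * κ) := by gcongr
    _ = ENNReal.ofReal (C₁ * κ.toReal * (τ * √τ)) := by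
        rw [← ENNReal.ofReal_toReal hκfin.ne, ← ENNReal.ofReal_mul (by positivity),
          ← ENNReal.ofReal_mul (by positivity), ENNReal.toReal_ofReal (by positivity), hC₁]
        congr 1; ring
    _ ≤ ENNReal.ofReal ((C₁ * κ.toReal + 1) * τ ^ ((3 : ℝ) / 2)) := by
        rw [hpow]
        apply ENNReal.ofReal_le_ofReal
        gcongr
        linarith
end
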